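/- arXiv:0809.0159 — 2 statements merged into one kernel-verified Lean document; each statement's English description precedes it below -/
import Mathlib

section
/- Let f : ℝ → ℝ be a terrain, G ⊆ ℝ a finite set of guards and N ⊆ ℝ a finite set of points such that every p ∈ N is seen from the left by some guard in G. Then the minimum cardinality of a set A ⊆ G such that every p ∈ N is seen from the left by some guard in A equals the maximum cardinality of a set X ⊆ N such that no guard in G sees two distinct points of X from the left. -/
/-!
The visibility relation has the order property of terrains: if `a < b < c < d`, `a` sees `c` and
`b` sees `d`, then `a` sees `d` (`Sees.order_claim`). Consequently, if `p` is the leftmost point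
of `N` and `g` is the leftmost guard seeing `p` from the left, then `g` sees from the left every
point of `N` that is seen from the left by some guard seeing `p` from the left.

A greedy procedure is therefore optimal: put `g` into `A` and `p` into `X`, discard every point
seen by `g` from the left, and repeat (`exists_greedy`). A guard seeing `p` sees no remaining
point, so `X` stays independent, and `A` has at most as many elements as `X`. Weak duality
(`card_le_of_cover_of_independent`) says that no independent set is larger than a covering set,
so both sets are optimal and have the same size.
-/

/-- `a` sees `b` on the terrain `f`. -/
def Sees (f : ℝ → ℝ) (a b : ℝ) : Prop :=
  ∀ t ∈ Set.Icc (0:ℝ) 1, f ((1 - t) * a + t * b) ≤ (1 - t) * f a + t * f b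

/-- A guard `g` sees a point `p` from the left. -/
def SeesLeft (f : ℝ → ℝ) (g p : ℝ) : Prop := g < p ∧ Sees f g p

/-- Visibility with the segment parametrised by abscissa and denominators cleared. -/
lemma sees_iff {f : ℝ → ℝ} {a b : ℝ} (hab : a < b) :
    Sees f a b ↔ ∀ x, a ≤ x → x ≤ b → f x * (b - a) ≤ (b - x) * f a + (x - a) * f b := by
  have hpos : 0 < b - a := sub_pos.2 hab
  constructor
  · intro h x hax hxb
    have ht := h ((x - a) / (b - a))
      ⟨div_nonneg (sub_nonneg.2 hax) hpos.le, (div_le_one hpos).2 (by linarith)⟩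
    have hx : (1 - (x - a) / (b - a)) * a + (x - a) / (b - a) * b = x := by
      field_simp
      ring
    rw [hx] at ht
    calc f x * (b - a)
        ≤ ((1 - (x - a) / (b - a)) * f a + (x - a) / (b - a) * f b) * (b - a) :=
          mul_le_mul_of_nonneg_right ht hpos.le
      _ = (b - x) * f a + (x - a) * f b := by
          field_simp
          ring
  · rintro h t ⟨ht0, ht1⟩
    have hx := h ((1 - t) * a + t * b) (by nlinarith) (by nlinarith)
    refine le_of_mul_le_mul_right (hx.trans_eq ?_) hpos
    ring

/-- The order property of terrains: the segments `ac` and `bd` cross, and the segment `ad` lies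
above the first on `[a, c]` and above the second on `[b, d]`. -/
lemma Sees.order_claim {f : ℝ → ℝ} {a b c d : ℝ} (hab : a < b) (hbc : b < c) (hcd : c < d)
    (hac : Sees f a c) (hbd : Sees f b d) : Sees f a d := by
  rw [sees_iff (hab.trans hbc)] at hac
  rw [sees_iff (hbc.trans hcd)] at hbd
  rw [sees_iff (hab.trans (hbc.trans hcd))]
  -- Slopes `m` of the line `ac` and `n` of the line `bd`.
  obtain ⟨m, hm⟩ : ∃ m, f c = f a + m * (c - a) :=
    ⟨(f c - f a) / (c - a), by rw [div_mul_cancel₀ _ (by linarith)]; ring⟩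
  obtain ⟨n, hn⟩ : ∃ n, f d = f b + n * (d - b) :=
    ⟨(f d - f b) / (d - b), by rw [div_mul_cancel₀ _ (by linarith)]; ring⟩
  have h1 : ∀ x, a ≤ x → x ≤ c → f x ≤ f a + m * (x - a) := fun x hx hx' => by
    have h := hac x hx hx'
    rw [hm] at h
    refine le_of_mul_le_mul_right (h.trans_eq ?_) (show 0 < c - a by linarith)
    ring
  have h2 : ∀ x, b ≤ x → x ≤ d → f x ≤ f b + n * (x - b) := fun x hx hx' => by
    have h := hbd x hx hx'
    rw [hn] at h
    refine le_of_mul_le_mul_right (h.trans_eq ?_) (show 0 < d - b by linarith)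
    ring
  have hb := h1 b hab.le hbc.le
  have hc := h2 c hbc.le hcd.le
  -- The line `bd` is below `ac` at `b` and above it at `c`.
  have hmn : m ≤ n := by
    by_contra! hlt
    nlinarith [mul_pos (sub_pos.2 hlt) (sub_pos.2 hbc)]
  have hd1 : f a + m * (d - a) ≤ f d := by
    nlinarith [mul_nonneg (sub_nonneg.2 hmn) (sub_pos.2 hcd).le]
  have ha2 : f b + n * (a - b) ≤ f a := by
    nlinarith [mul_nonneg (sub_nonneg.2 hmn) (sub_pos.2 hab).le]
  intro x hax hxd
  rcases le_total x c with hxc | hcx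
  · have h := mul_le_mul_of_nonneg_right (h1 x hax hxc) (show 0 ≤ d - a by linarith)
    have h' := mul_le_mul_of_nonneg_left hd1 (sub_nonneg.2 hax)
    linarith
  · have h := mul_le_mul_of_nonneg_right (h2 x (by linarith) hxd) (show 0 ≤ d - a by linarith)
    have h' := mul_le_mul_of_nonneg_left ha2 (sub_nonneg.2 hxd)
    rw [hn]
    linarith

/-- Weak duality: distinct points of an independent set need distinct guards. -/
lemma card_le_of_cover_of_independent {f : ℝ → ℝ} {G N A X : Finset ℝ} (hA : A ⊆ G) (hX : X ⊆ N)
    (hcov : ∀ p ∈ N, ∃ g ∈ A, SeesLeft f g p)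
    (hind : ∀ g ∈ G, ∀ p ∈ X, ∀ q ∈ X, p ≠ q → ¬ (SeesLeft f g p ∧ SeesLeft f g q)) :
    X.card ≤ A.card := by
  choose! s hsA hs using hcov
  refine Finset.card_le_card_of_injOn s (fun p hp => hsA p (hX hp)) fun p hp q hq hpq => ?_
  by_contra hne
  exact hind (s p) (hA (hsA p (hX hp))) p hp q hq hne
    ⟨hs p (hX hp), hpq ▸ hs q (hX hq)⟩

/-- The greedy step: the leftmost guard seeing the leftmost point `p` dominates every guard
seeing `p`. -/
lemma exists_dominating_guard {f : ℝ → ℝ} {G N : Finset ℝ} (hN : N.Nonempty)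
    (hcov : ∀ p ∈ N, ∃ g ∈ G, SeesLeft f g p) :
    ∃ p ∈ N, ∃ g ∈ G, SeesLeft f g p ∧
      ∀ g' ∈ G, SeesLeft f g' p → ∀ q ∈ N, SeesLeft f g' q → SeesLeft f g q := by
  classical
  obtain ⟨p, hp, hpmin⟩ := N.exists_min_image id hN
  obtain ⟨g₀, hg₀, hg₀p⟩ := hcov p hp
  obtain ⟨g, hg, hgmin⟩ := (G.filter fun g => SeesLeft f g p).exists_min_image id
    ⟨g₀, Finset.mem_filter.2 ⟨hg₀, hg₀p⟩⟩
  obtain ⟨hgG, hgp⟩ := Finset.mem_filter.1 hg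
  refine ⟨p, hp, g, hgG, hgp, fun g' hg' hg'p q hq hg'q => ?_⟩
  have hle : g ≤ g' := hgmin g' (Finset.mem_filter.2 ⟨hg', hg'p⟩)
  have hpq : p ≤ q := hpmin q hq
  rcases hle.eq_or_lt with rfl | hlt
  · exact hg'q
  rcases hpq.eq_or_lt with rfl | hpq
  · exact hgp
  exact ⟨hgp.1.trans hpq, hgp.2.order_claim hlt hg'p.1 hpq hg'q.2⟩

lemma exists_greedy (f : ℝ → ℝ) (G N : Finset ℝ) (hcov : ∀ p ∈ N, ∃ g ∈ G, SeesLeft f g p) :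
    ∃ A ⊆ G, ∃ X ⊆ N,
      (∀ p ∈ N, ∃ g ∈ A, SeesLeft f g p) ∧
      (∀ g ∈ G, ∀ p ∈ X, ∀ q ∈ X, p ≠ q → ¬ (SeesLeft f g p ∧ SeesLeft f g q)) ∧
      A.card ≤ X.card := by
  classical
  induction N using Finset.strongInduction with
  | H N ih =>
    rcases N.eq_empty_or_nonempty with rfl | hN
    · exact ⟨∅, by simp, ∅, by simp, by simp, by simp, by simp⟩
    obtain ⟨p, hp, g, hg, hgp, hdom⟩ := exists_dominating_guard hN hcov
    have hsub : N.filter (fun q => ¬ SeesLeft f g q) ⊂ N :=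
      Finset.filter_ssubset.2 ⟨p, hp, not_not.2 hgp⟩
    obtain ⟨A, hA, X, hX, hAcov, hXind, hcard⟩ := ih _ hsub fun q hq => hcov q (hsub.1 hq)
    have hXmem : ∀ q ∈ X, q ∈ N ∧ ¬ SeesLeft f g q := fun q hq => Finset.mem_filter.1 (hX hq)
    have hpX : p ∉ X := fun h => (hXmem p h).2 hgp
    refine ⟨insert g A, Finset.insert_subset hg hA, insert p X,
      Finset.insert_subset hp (hX.trans hsub.1), ?_, ?_, ?_⟩
    · intro q hq
      by_cases hgq : SeesLeft f g q
      · exact ⟨g, Finset.mem_insert_self _ _, hgq⟩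
      · obtain ⟨g', hg', h⟩ := hAcov q (Finset.mem_filter.2 ⟨hq, hgq⟩)
        exact ⟨g', Finset.mem_insert_of_mem hg', h⟩
    · rintro g' hg' x hx y hy hne ⟨hgx, hgy⟩
      rcases Finset.mem_insert.1 hx with rfl | hxX <;>
        rcases Finset.mem_insert.1 hy with rfl | hyX
      · exact hne rfl
      · exact (hXmem y hyX).2 (hdom g' hg' hgx y (hXmem y hyX).1 hgy)
      · exact (hXmem x hxX).2 (hdom g' hg' hgy x (hXmem x hxX).1 hgx)
      · exact hXind g' hg' x hxX y hyX hne ⟨hgx, hgy⟩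
    · rw [Finset.card_insert_of_notMem hpX]
      exact (Finset.card_insert_le g A).trans (Nat.succ_le_succ hcard)

/-- Min–max duality for left-guarding: the minimum size of a left-guarding set
equals the maximum size of a set of points no two of which are seen from the
left by a common guard. -/
theorem left_guarding_min_eq_max (f : ℝ → ℝ) (G N : Finset ℝ)
    (hcov : ∀ p ∈ N, ∃ g ∈ G, SeesLeft f g p) :
    ∃ A ⊆ G, ∃ X ⊆ N,
      (∀ p ∈ N, ∃ g ∈ A, SeesLeft f g p) ∧
      (∀ g ∈ G, ∀ p ∈ X, ∀ q ∈ X, p ≠ q →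
          ¬ (SeesLeft f g p ∧ SeesLeft f g q)) ∧
      A.card = X.card ∧
      (∀ A' ⊆ G, (∀ p ∈ N, ∃ g ∈ A', SeesLeft f g p) → A.card ≤ A'.card) ∧
      (∀ X' ⊆ N, (∀ g ∈ G, ∀ p ∈ X', ∀ q ∈ X', p ≠ q →
          ¬ (SeesLeft f g p ∧ SeesLeft f g q)) → X'.card ≤ X.card) := by
  obtain ⟨A, hA, X, hX, hAcov, hXind, hcard⟩ := exists_greedy f G N hcov
  exact ⟨A, hA, X, hX, hAcov, hXind,
    hcard.antisymm (card_le_of_cover_of_independent hA hX hAcov hXind),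
    fun A' hA' hcov' => hcard.trans (card_le_of_cover_of_independent hA' hX hcov' hXind),
    fun X' hX' hind' => (card_le_of_cover_of_independent hA hX' hAcov hind').trans hcard⟩
end

section
/- Reduction from continuous guarding to one-sided vertex guarding: let a piecewise-linear terrain be given by a strictly increasing map x : Fin (n+1) → ℝ (the vertex abscissae, with vertex set V = { x i : i }) and a function f : ℝ → ℝ that is affine on each interval [x i, x (i+1)]. Let A* ⊆ [x 0, x n] be a finite set such that every t ∈ [x 0, x n] is seen by some g ∈ A*. Then there exist sets A_L ⊆ V and A_R ⊆ V with |A_L| + |A_R| ≤ 2·|A*| such that every t ∈ [x 0, x n] with t ∉ V is seen from the left by some v ∈ A_L or from the right by some v ∈ A_R. -/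
/-- Visibility between `a < b`, parametrized by the abscissa `s` and without denominators. -/
lemma sees_iff_of_lt {f : ℝ → ℝ} {a b : ℝ} (hab : a < b) :
    Sees f a b ↔ ∀ s ∈ Set.Icc a b, f s * (b - a) ≤ (b - s) * f a + (s - a) * f b := by
  have hd : 0 < b - a := sub_pos.2 hab
  constructor
  · intro h s hs
    have h1 := h ((s - a) / (b - a))
      ⟨div_nonneg (sub_nonneg.2 hs.1) hd.le, (div_le_one hd).2 (by linarith [hs.2])⟩
    have e1 : (1 - (s - a) / (b - a)) * a + (s - a) / (b - a) * b = s := by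
      field_simp
      ring
    have e2 : (1 - (s - a) / (b - a)) * f a + (s - a) / (b - a) * f b
        = ((b - s) * f a + (s - a) * f b) / (b - a) := by
      field_simp
      ring
    rw [e1, e2, le_div_iff₀ hd] at h1
    exact h1
  · intro h t ht
    have h1 := h ((1 - t) * a + t * b)
      ⟨by nlinarith [mul_nonneg ht.1 hd.le],
        by nlinarith [mul_nonneg (sub_nonneg.2 ht.2) hd.le]⟩
    refine le_of_mul_le_mul_right (h1.trans (le_of_eq ?_)) hd
    ring

/-- Visibility is invariant under reflection of the terrain. -/
lemma Sees.reflect {f : ℝ → ℝ} {a b : ℝ} (h : Sees f a b) :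
    Sees (fun s => f (-s)) (-a) (-b) := by
  intro t ht
  have e : -((1 - t) * -a + t * -b) = (1 - t) * a + t * b := by ring
  simpa only [e, neg_neg] using h t ht

/-- The left end `p` of an edge sees everything to the right that an interior point `g` sees. -/
lemma sees_left_end {f : ℝ → ℝ} {p g q m c t : ℝ} (hpg : p < g) (hgq : g < q)
    (hf : ∀ s ∈ Set.Icc p q, f s = m * s + c) (hgt : g ≤ t) (h : Sees f g t) :
    Sees f p t := by
  have hfp := hf p ⟨le_rfl, by linarith⟩
  have hfg := hf g ⟨hpg.le, hgq.le⟩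
  -- `(t, f t)` is on or above the line carrying the edge
  have hD : 0 ≤ f t - (m * t + c) := by
    rcases le_or_gt t q with htq | hqt
    · rw [hf t ⟨by linarith, htq⟩, sub_self]
    · have hq := (sees_iff_of_lt (hgq.trans hqt)).1 h q ⟨hgq.le, hqt.le⟩
      rw [hfg, hf q ⟨by linarith, le_rfl⟩] at hq
      refine le_of_mul_le_mul_left ?_ (sub_pos.2 hgq)
      linarith
  rw [sees_iff_of_lt (hpg.trans_le hgt)]
  intro s hs
  rw [hfp]
  rcases le_or_gt s g with hsg | hgs
  · rw [hf s ⟨hs.1, by linarith⟩]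
    linarith [mul_nonneg (sub_nonneg.2 hs.1) hD]
  · have hgt' : g < t := hgs.trans_le hs.2
    have h1 := (sees_iff_of_lt hgt').1 h s ⟨hgs.le, hs.2⟩
    rw [hfg] at h1
    -- over the line of the edge, the height at `s` is at most the interpolation between `0` at `g`
    -- and the height at `t`, which is at most the interpolation between `0` at `p` and that height
    have h2 : (f s - (m * s + c)) * (t - g) ≤ (s - g) * (f t - (m * t + c)) := by linarith
    have h3 := mul_le_mul_of_nonneg_right h2 (by linarith [hs.2] : 0 ≤ t - p)
    have h4 : 0 ≤ (g - p) * (t - s) * (f t - (m * t + c)) :=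
      mul_nonneg (mul_nonneg (by linarith) (by linarith [hs.2])) hD
    have h5 : (f s - (m * s + c)) * (t - p) ≤ (s - p) * (f t - (m * t + c)) := by
      refine le_of_mul_le_mul_right ?_ (sub_pos.2 hgt')
      linarith
    linarith

lemma sees_right_end {f : ℝ → ℝ} {p g q m c t : ℝ} (hpg : p < g) (hgq : g < q)
    (hf : ∀ s ∈ Set.Icc p q, f s = m * s + c) (htg : t ≤ g) (h : Sees f g t) :
    Sees f q t := by
  have h1 : Sees (fun s => f (-s)) (-q) (-t) := by
    refine sees_left_end (m := -m) (c := c) (neg_lt_neg hgq) (neg_lt_neg hpg) ?_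
      (neg_le_neg htg) h.reflect
    intro s hs
    rw [hf (-s) ⟨by linarith [hs.2], by linarith [hs.1]⟩]
    ring
  simpa only [neg_neg] using h1.reflect

lemma exists_edge_of_not_vertex {n : ℕ} {x : Fin (n + 1) → ℝ} {g : ℝ}
    (hg : g ∈ Set.Icc (x 0) (x (Fin.last n))) (hv : ∀ i, x i ≠ g) :
    ∃ i : Fin n, x i.castSucc < g ∧ g < x i.succ := by
  by_contra! hno
  have hall : ∀ i, x i < g := by
    intro i
    induction i using Fin.induction with
    | zero => exact lt_of_le_of_ne hg.1 (hv 0)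
    | succ i ih => exact lt_of_le_of_ne (hno i ih) (hv _)
  exact absurd (hall (Fin.last n)) (not_lt.2 hg.2)

/-- Reduction from continuous guarding to one-sided guarding at the vertices:
any continuous guarding set `A*` can be replaced by left and right guards on the
vertices, at most doubling the number of guards, so that every non-vertex point
of the terrain is seen from the left or from the right. -/
theorem continuous_to_one_sided_vertex_guarding {n : ℕ}
    (x : Fin (n + 1) → ℝ) (hx : StrictMono x) (f : ℝ → ℝ)
    (haff : ∀ i : Fin n, ∃ a b : ℝ,
      ∀ t ∈ Set.Icc (x i.castSucc) (x i.succ), f t = a * t + b)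
    (Astar : Finset ℝ)
    (hA : ∀ g ∈ Astar, g ∈ Set.Icc (x 0) (x (Fin.last n)))
    (hcov : ∀ t ∈ Set.Icc (x 0) (x (Fin.last n)), ∃ g ∈ Astar, Sees f g t) :
    ∃ A_L A_R : Finset ℝ,
      (∀ v ∈ A_L, ∃ i, x i = v) ∧ (∀ v ∈ A_R, ∃ i, x i = v) ∧
      A_L.card + A_R.card ≤ 2 * Astar.card ∧
      ∀ t ∈ Set.Icc (x 0) (x (Fin.last n)), (∀ i, x i ≠ t) →
        (∃ v ∈ A_L, v < t ∧ Sees f v t) ∨ (∃ v ∈ A_R, t < v ∧ Sees f v t) := by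
  classical
  have key : ∀ g : ℝ, ∃ i j : Fin (n + 1), g ∈ Astar → ∀ t, (∀ k, x k ≠ t) → Sees f g t →
      (x i < t ∧ Sees f (x i) t) ∨ (t < x j ∧ Sees f (x j) t) := by
    intro g
    by_cases hg : g ∈ Astar
    swap
    · exact ⟨0, 0, fun h => absurd h hg⟩
    by_cases hv : ∃ i, x i = g
    · obtain ⟨i, rfl⟩ := hv
      exact ⟨i, i, fun _ t ht hs => (lt_or_gt_of_ne (ht i)).imp (⟨·, hs⟩) (⟨·, hs⟩)⟩
    · obtain ⟨i, hpg, hgq⟩ := exists_edge_of_not_vertex (hA g hg) (not_exists.1 hv)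
      obtain ⟨m, c, hf⟩ := haff i
      refine ⟨i.castSucc, i.succ, fun _ t _ hs => ?_⟩
      rcases le_or_gt g t with hgt | htg
      · exact Or.inl ⟨hpg.trans_le hgt, sees_left_end hpg hgq hf hgt hs⟩
      · exact Or.inr ⟨htg.trans hgq, sees_right_end hpg hgq hf htg.le hs⟩
  choose l r hlr using key
  refine ⟨Astar.image (fun g => x (l g)), Astar.image (fun g => x (r g)), ?_, ?_, ?_, ?_⟩
  · intro v hv
    obtain ⟨g, -, rfl⟩ := Finset.mem_image.1 hv
    exact ⟨_, rfl⟩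
  · intro v hv
    obtain ⟨g, -, rfl⟩ := Finset.mem_image.1 hv
    exact ⟨_, rfl⟩
  · rw [two_mul]
    exact add_le_add Finset.card_image_le Finset.card_image_le
  · intro t ht hnv
    obtain ⟨g, hg, hs⟩ := hcov t ht
    exact (hlr g hg t hnv hs).imp
      (fun h => ⟨_, Finset.mem_image_of_mem _ hg, h⟩)
      (fun h => ⟨_, Finset.mem_image_of_mem _ hg, h⟩)
end
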